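/- Let G be a group, H a subgroup of G, and Γ = G *_H G the amalgamated free product of two copies of G along the identity map of H, with the two canonical homomorphisms ι₁, ι₂ : G → Γ. Then for every g ∈ G, the elements ι₁(g) and ι₂(g) are conjugate in Γ if and only if g is conjugate in G to some element of H. -/

import Mathlib

/-!
Let `Γ` act on a set `X` with a point `x₀` fixed by the amalgamated subgroup `H`. Since `ℕ × X`
contains infinitely many copies of `x₀`, adding a further `H`-fixed point does not change it as an
`H`-set. We may therefore let one factor act on `ℕ × X` as before and the other one as on
`Option (ℕ × X)`; these actions agree on `H`, hence define an action of `Γ`. Every element of the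
second factor fixes a point, so every element of the first factor conjugate in `Γ` to one of the
second fixes a point of `ℕ × X`, that is, of `X`. For `X = Γ ⧸ S`, where `S` is a subgroup
containing `H`, this says that such an element is conjugate into `S`. In the double, take for `S`
the preimage of `H` under the folding map `Γ → G`, and fold.
-/

open Monoid

section AbsorbPoint

variable {X : Type*} [DecidableEq X]

/-- The Hilbert hotel bijection which absorbs an extra point into `ℕ × X` by shifting the copies
`(n, x₀)` of the base point. The product is written as a sigma type because a group acting on `X`
then acts on it through the second coordinate. -/
def absorbPoint (x₀ : X) : Option (Σ _ : ℕ, X) ≃ Σ _ : ℕ, X where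
  toFun
    | none => ⟨0, x₀⟩
    | some ⟨n, x⟩ => if x = x₀ then ⟨n + 1, x⟩ else ⟨n, x⟩
  invFun
    | ⟨0, x⟩ => if x = x₀ then none else some ⟨0, x⟩
    | ⟨n + 1, x⟩ => if x = x₀ then some ⟨n, x⟩ else some ⟨n + 1, x⟩
  left_inv := by
    rintro (_ | ⟨_ | n, x⟩)
    · simp
    all_goals by_cases hx : x = x₀ <;> simp [hx]
  right_inv := by
    rintro ⟨_ | n, x⟩
    all_goals by_cases hx : x = x₀ <;> simp [hx]

theorem absorbPoint_none (x₀ : X) : absorbPoint x₀ none = ⟨0, x₀⟩ := rfl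

theorem absorbPoint_some (x₀ : X) (n : ℕ) (x : X) :
    absorbPoint x₀ (some ⟨n, x⟩) = if x = x₀ then ⟨n + 1, x⟩ else ⟨n, x⟩ := rfl

theorem absorbPoint_smul {G : Type*} [Group G] [MulAction G X] {g : G} {x₀ : X}
    (hg : g • x₀ = x₀) (y : Option (Σ _ : ℕ, X)) :
    absorbPoint x₀ (g • y) = g • absorbPoint x₀ y := by
  rcases y with _ | ⟨n, x⟩
  · rw [Option.smul_none, absorbPoint_none, Sigma.smul_mk, hg]
  · have hx : g • x = x₀ ↔ x = x₀ := by rw [smul_eq_iff_eq_inv_smul, ← eq_inv_smul_iff.2 hg]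
    simp only [Option.smul_some, Sigma.smul_mk, absorbPoint_some, hx]
    split_ifs <;> rfl

end AbsorbPoint

section Amalgam

variable {ι H : Type*} {G : ι → Type*} [Group H] [∀ k, Group (G k)] {φ : ∀ k, H →* G k}

theorem isConj_map_of_isConj_of {M : Type*} [Monoid M] {ρ σ : PushoutI φ →* M}
    (hρσ : σ.comp (PushoutI.base φ) = ρ.comp (PushoutI.base φ)) {i j : ι} (hij : i ≠ j)
    {a : G i} {b : G j} (hab : IsConj (PushoutI.of (φ := φ) i a) (PushoutI.of j b)) :
    IsConj (ρ (PushoutI.of i a)) (σ (PushoutI.of j b)) := by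
  classical
  let glued : PushoutI φ →* M :=
    PushoutI.lift (fun k => (if k = i then ρ else σ).comp (PushoutI.of k))
      (ρ.comp (PushoutI.base φ)) fun k => by
        rw [MonoidHom.comp_assoc, PushoutI.of_comp_eq_base]
        split_ifs
        · rfl
        · exact hρσ
  simpa [glued, hij.symm] using glued.map_isConj hab

theorem exists_smul_eq_self_of_isConj_of {X : Type*} [MulAction (PushoutI φ) X] {x₀ : X}
    (hx₀ : ∀ h, PushoutI.base φ h • x₀ = x₀) {i j : ι} (hij : i ≠ j) {a : G i} {b : G j}
    (hab : IsConj (PushoutI.of (φ := φ) i a) (PushoutI.of j b)) :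
    ∃ x : X, PushoutI.of (φ := φ) i a • x = x := by
  classical
  let e := absorbPoint x₀
  let ρ := MulAction.toPermHom (PushoutI φ) (Σ _ : ℕ, X)
  let σ : PushoutI φ →* Equiv.Perm (Σ _ : ℕ, X) :=
    e.permCongrHom.toMonoidHom.comp (MulAction.toPermHom _ (Option (Σ _ : ℕ, X)))
  have σ_apply (p : PushoutI φ) (y) : σ p (e y) = e (p • y) :=
    congrArg (fun y => e (p • y)) (e.symm_apply_apply y)
  have hρσ : σ.comp (PushoutI.base φ) = ρ.comp (PushoutI.base φ) := by
    ext1 h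
    refine Equiv.ext fun y => ?_
    obtain ⟨y, rfl⟩ := e.surjective y
    exact (σ_apply _ y).trans (absorbPoint_smul (hx₀ h) y)
  have σ_fixes : σ (PushoutI.of j b) (e none) = e none := σ_apply _ none
  obtain ⟨c, hc⟩ := isConj_iff.1 (isConj_map_of_isConj_of hρσ hij hab).symm
  have ρ_fixes : ρ (PushoutI.of i a) (c (e none)) = c (e none) := calc
    _ = (c * σ (PushoutI.of j b)) (e none) := by rw [mul_inv_eq_iff_eq_mul.1 hc]; rfl
    _ = c (e none) := by rw [Equiv.Perm.mul_apply, σ_fixes]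
  exact ⟨(c (e none)).2, congrArg Sigma.snd ρ_fixes⟩

theorem exists_mem_isConj_of_isConj_of {S : Subgroup (PushoutI φ)}
    (hS : (PushoutI.base φ).range ≤ S) {i j : ι} (hij : i ≠ j) {a : G i} {b : G j}
    (hab : IsConj (PushoutI.of (φ := φ) i a) (PushoutI.of j b)) :
    ∃ s ∈ S, IsConj s (PushoutI.of (φ := φ) i a) := by
  have base_fixes (h : H) :
      PushoutI.base φ h • ((1 : PushoutI φ) : PushoutI φ ⧸ S) = (1 : PushoutI φ) := by
    rw [← MulAction.mem_stabilizer_iff, MulAction.stabilizer_quotient]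
    exact hS ⟨h, rfl⟩
  obtain ⟨x, hx⟩ := exists_smul_eq_self_of_isConj_of base_fixes hij hab
  obtain ⟨z, rfl⟩ := QuotientGroup.mk_surjective x
  exact ⟨z⁻¹ * (PushoutI.of i a * z), QuotientGroup.eq.1 hx.symm, isConj_iff.2 ⟨z, by group⟩⟩

end Amalgam

section FoldingMap

variable {ι G H : Type*} [Group G] [Group H] (φ : H →* G)

/-- The folding map onto `G` from the amalgam of copies of `G`, the identity on each copy. -/
def foldHom : PushoutI (fun _ : ι => φ) →* G :=
  PushoutI.lift (fun _ => MonoidHom.id G) φ fun _ => rfl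

theorem foldHom_of (i : ι) (g : G) :
    foldHom φ (PushoutI.of (φ := fun _ : ι => φ) i g) = g :=
  PushoutI.lift_of ..

theorem foldHom_base (h : H) : foldHom φ (PushoutI.base (fun _ : ι => φ) h) = φ h :=
  PushoutI.lift_base ..

theorem stmt_15_general {i j : ι} (hij : i ≠ j) (g : G) :
    IsConj (PushoutI.of (φ := fun _ : ι => φ) i g) (PushoutI.of j g) ↔
      ∃ h, IsConj (φ h) g := by
  constructor
  · intro hg
    have base_le : (PushoutI.base fun _ : ι => φ).range ≤ φ.range.comap (foldHom φ) := by
      rintro _ ⟨h, rfl⟩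
      exact ⟨h, (foldHom_base φ h).symm⟩
    obtain ⟨s, ⟨h, hs⟩, hsg⟩ := exists_mem_isConj_of_isConj_of base_le hij hg
    exact ⟨h, by simpa only [hs, foldHom_of] using (foldHom φ).map_isConj hsg⟩
  · rintro ⟨h, hg⟩
    have of_isConj (k : ι) : IsConj (PushoutI.base (fun _ : ι => φ) h) (PushoutI.of k g) := by
      simpa only [PushoutI.of_apply_eq_base] using
        (PushoutI.of (φ := fun _ : ι => φ) k).map_isConj hg
    exact (of_isConj i).symm.trans (of_isConj j)

end FoldingMap

/-- In the double `Γ = G *_H G` (the amalgamated free product of two copies of `G`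
along the identity of `H`), the images of `g ∈ G` under the two canonical maps are
conjugate in `Γ` iff `g` is conjugate in `G` to an element of `H`. -/
theorem stmt_15 (G : Type*) [Group G] (H : Subgroup G) (g : G) :
    (∃ z : Monoid.PushoutI (fun _ : Bool => H.subtype),
        Monoid.PushoutI.of (φ := fun _ : Bool => H.subtype) true g =
          z * Monoid.PushoutI.of (φ := fun _ : Bool => H.subtype) false g * z⁻¹) ↔
      ∃ h ∈ H, ∃ z : G, g = z * h * z⁻¹ := by
  simpa [isConj_iff, eq_comm] using stmt_15_general H.subtype Bool.false_ne_true g
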